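/- Let α ∈ ℚ be a rational number. (i) If α < 0, then for every prime ℓ the Ruban continued fraction expansion of α in ℚ_ℓ does not terminate. (ii) If α ≥ 0 and α ∈ ℤ, then there are only finitely many primes ℓ such that the Ruban continued fraction expansion of α in ℚ_ℓ does not terminate. (iii) If α ≥ 0 and α ∉ ℤ, then there are only finitely many primes ℓ such that the Ruban continued fraction expansion of α in ℚ_ℓ terminates. -/

import Mathlib

open Filter Topology
open scoped Classical

/-- `a` is the `ℓ`-adic integral part of the rational number `α`. -/
def IsRubanFloorQ (p : ℕ) (α a : ℚ) : Prop :=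
  (∃ (m : ℤ) (k : ℕ), a = (m : ℚ) / (p : ℚ) ^ k) ∧ 0 ≤ a ∧ a < (p : ℚ) ∧
    padicNorm p (α - a) < 1

noncomputable def rubanFloorQ (p : ℕ) (α : ℚ) : ℚ :=
  if h : ∃ a : ℚ, IsRubanFloorQ p α a then h.choose else 0

/-- Complete quotients of the Ruban continued fraction expansion of a rational number. -/
noncomputable def rubanCQQ (p : ℕ) (α : ℚ) : ℕ → ℚ
  | 0 => α
  | n + 1 => (rubanCQQ p α n - rubanFloorQ p (rubanCQQ p α n))⁻¹

/-- Partial quotients of the Ruban continued fraction expansion of a rational number. -/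
noncomputable def rubanPQQ (p : ℕ) (α : ℚ) (n : ℕ) : ℚ :=
  rubanFloorQ p (rubanCQQ p α n)

/-- The Ruban continued fraction expansion of `α` terminates. -/
def RubanTerminatesQ (p : ℕ) (α : ℚ) : Prop :=
  ∃ n, rubanCQQ p α n = rubanPQQ p α n


theorem rubanFloorQ_nonneg' (p : ℕ) (α : ℚ) : 0 ≤ rubanFloorQ p α := by
  unfold rubanFloorQ
  split_ifs with h
  · exact h.choose_spec.2.1
  · exact le_rfl

theorem rubanCQQ_nonneg_of_succ (p : ℕ) (α : ℚ) (n : ℕ) (h : 0 ≤ rubanCQQ p α (n + 1)) :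
    rubanFloorQ p (rubanCQQ p α n) ≤ rubanCQQ p α n := by
  rw [rubanCQQ, inv_nonneg] at h
  linarith

theorem rubanCQQ_nonneg_down (p : ℕ) (α : ℚ) (n : ℕ) (h : 0 ≤ rubanCQQ p α n) : 0 ≤ α := by
  induction n with
  | zero => exact h
  | succ n ih =>
    exact ih ((rubanFloorQ_nonneg' p _).trans (rubanCQQ_nonneg_of_succ p α n h))

theorem rubanCQQ_one_nonneg (p : ℕ) (α : ℚ) (n : ℕ) (h : 0 ≤ rubanCQQ p α (n + 1)) :
    0 ≤ rubanCQQ p α 1 := by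
  induction n with
  | zero => exact h
  | succ n ih =>
    exact ih ((rubanFloorQ_nonneg' p _).trans (rubanCQQ_nonneg_of_succ p α (n + 1) h))

theorem ruban_floor_le (p : ℕ) (α : ℚ) (h : RubanTerminatesQ p α) : rubanFloorQ p α ≤ α := by
  obtain ⟨n, hn⟩ := h
  have h0 : 0 ≤ rubanCQQ p α n := by rw [hn]; exact rubanFloorQ_nonneg' p _
  cases n with
  | zero => exact hn.symm.le
  | succ n => exact rubanCQQ_nonneg_of_succ p α 0 (rubanCQQ_one_nonneg p α n h0)

theorem ruban_norm (p : ℕ) (hp : p.Prime) (α : ℚ) (hd : ¬ p ∣ α.den) (z : ℤ) :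
    padicNorm p (α - z) = padicNorm p ((α.num - z * α.den : ℤ) : ℚ) := by
  haveI := Fact.mk hp
  have hB : padicNorm p (α.den : ℚ) = 1 := (padicNorm.nat_eq_one_iff _).2 hd
  have hB0 : (α.den : ℚ) ≠ 0 := by exact_mod_cast α.den_nz
  have : ((α.num - z * α.den : ℤ) : ℚ) = (α - z) * α.den := by
    push_cast
    rw [sub_mul, Rat.mul_den_eq_num]
  rw [this, padicNorm.mul, hB, mul_one]

theorem ruban_floor_spec (p : ℕ) (hp : p.Prime) (α : ℚ) (hd : ¬ p ∣ α.den) :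
    ∃ z : ℤ, rubanFloorQ p α = z ∧ 0 ≤ z ∧ z < p ∧ (p : ℤ) ∣ α.num - z * α.den := by
  haveI := Fact.mk hp
  have hp0 : (p : ℤ) ≠ 0 := by exact_mod_cast hp.ne_zero
  have hpp : (0 : ℤ) < p := by exact_mod_cast hp.pos
  have hpq : (p : ℚ) ≠ 0 := by exact_mod_cast hp.ne_zero
  have hex : ∃ a : ℚ, IsRubanFloorQ p α a := by
    have hc : IsCoprime (α.den : ℤ) (p : ℤ) :=
      Nat.isCoprime_iff_coprime.2 ((hp.coprime_iff_not_dvd.2 hd).symm)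
    obtain ⟨u, v, huv⟩ := hc
    refine ⟨((α.num * u % p : ℤ) : ℚ), ⟨α.num * u % p, 0, by simp⟩, ?_, ?_, ?_⟩
    · exact_mod_cast Int.emod_nonneg _ hp0
    · exact_mod_cast Int.emod_lt_of_pos _ hpp
    · rw [ruban_norm p hp α hd, padicNorm.int_lt_one_iff]
      refine ⟨α.num * v + (α.num * u / p) * α.den, ?_⟩
      have h1 := Int.emod_add_mul_ediv (α.num * u) p
      linear_combination (-α.num) * huv - (α.den : ℤ) * h1
  have hs : IsRubanFloorQ p α (rubanFloorQ p α) := by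
    unfold rubanFloorQ
    rw [dif_pos hex]
    exact hex.choose_spec
  obtain ⟨⟨m, k, hmk⟩, h0, h1, h2⟩ := hs
  have hα : padicNorm p α ≤ 1 := by
    have h := ruban_norm p hp α hd 0
    simp only [Int.cast_zero, sub_zero] at h
    rw [h]
    exact padicNorm.of_int _
  have ha : padicNorm p (rubanFloorQ p α) ≤ 1 := by
    have h := padicNorm.sub (p := p) (q := α) (r := α - rubanFloorQ p α)
    rw [sub_sub_cancel] at h
    exact h.trans (max_le hα h2.le)
  have hdvd : ((p ^ k : ℕ) : ℤ) ∣ m := by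
    rw [padicNorm.dvd_iff_norm_le]
    have : (m : ℚ) = rubanFloorQ p α * ((p ^ k : ℕ) : ℚ) := by
      rw [hmk]; push_cast; field_simp
    rw [this, padicNorm.mul]
    have h3 : padicNorm p ((p ^ k : ℕ) : ℚ) ≤ (p : ℚ) ^ (-k : ℤ) := by
      have := (padicNorm.dvd_iff_norm_le (p := p) (n := k) (z := ((p ^ k : ℕ) : ℤ))).1 dvd_rfl
      exact_mod_cast this
    calc _ ≤ 1 * padicNorm p ((p ^ k : ℕ) : ℚ) :=
          mul_le_mul_of_nonneg_right ha (padicNorm.nonneg _)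
      _ ≤ _ := by rw [one_mul]; exact h3
  obtain ⟨z, hz⟩ := hdvd
  have hfz : rubanFloorQ p α = z := by
    rw [hmk, hz]; push_cast; field_simp
  rw [hfz] at h0 h1 h2
  refine ⟨z, hfz, by exact_mod_cast h0, by exact_mod_cast h1, ?_⟩
  rwa [ruban_norm p hp α hd, padicNorm.int_lt_one_iff] at h2

/-- (i) Negative rationals never have a terminating Ruban expansion;
(ii) for a non-negative integer the expansion terminates for all but finitely many primes;
(iii) for a non-negative non-integral rational the expansion terminates for at most
finitely many primes. -/
theorem ruban_rational_termination_varying_prime (α : ℚ) :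
    (α < 0 → ∀ ℓ : ℕ, ℓ.Prime → ¬ RubanTerminatesQ ℓ α) ∧
    (0 ≤ α → α.den = 1 → {ℓ : ℕ | ℓ.Prime ∧ ¬ RubanTerminatesQ ℓ α}.Finite) ∧
    (0 ≤ α → α.den ≠ 1 → {ℓ : ℕ | ℓ.Prime ∧ RubanTerminatesQ ℓ α}.Finite) := by
  refine ⟨?_, ?_, ?_⟩
  · rintro hα p - ⟨n, hn⟩
    have h0 : 0 ≤ rubanCQQ p α n := by rw [hn]; exact rubanFloorQ_nonneg' p _
    exact absurd (rubanCQQ_nonneg_down p α n h0) (not_le.2 hα)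
  · intro hα hd
    refine (Set.finite_Iic α.num.toNat).subset ?_
    rintro p ⟨hp, ht⟩
    by_contra hlt
    simp only [Set.mem_Iic, not_le] at hlt
    have hn : 0 ≤ α.num := Rat.num_nonneg.2 hα
    obtain ⟨z, hz, hz0, hzp, hdvd⟩ := ruban_floor_spec p hp α (by rw [hd]; exact hp.one_lt.ne' ∘ Nat.dvd_one.1)
    apply ht
    refine ⟨0, ?_⟩
    change α = rubanFloorQ p α
    rw [hz]
    rw [hd] at hdvd
    have h := Int.eq_zero_of_abs_lt_dvd hdvd (by rw [abs_lt]; push_cast; constructor <;> omega)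
    have h2 : α.num = z := by push_cast at h; omega
    rw [← h2]
    exact ((Rat.den_eq_one_iff α).1 hd).symm
  · intro hα hd
    refine (Set.finite_Iic (max α.num.toNat α.den)).subset ?_
    rintro p ⟨hp, ht⟩
    by_contra hlt
    simp only [Set.mem_Iic, not_le, max_lt_iff] at hlt
    obtain ⟨hl1, hl2⟩ := hlt
    have hn : 0 ≤ α.num := Rat.num_nonneg.2 hα
    obtain ⟨z, hz, hz0, hzp, hdvd⟩ := ruban_floor_spec p hp α
      (fun h => absurd (Nat.le_of_dvd α.den_pos h) (not_le.2 hl2))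
    have hle := ruban_floor_le p α ht
    rw [hz] at hle
    have hdp : (0 : ℚ) < α.den := by exact_mod_cast α.den_pos
    have h1 : z * α.den ≤ α.num := by
      have := mul_le_mul_of_nonneg_right hle hdp.le
      rw [Rat.mul_den_eq_num] at this
      exact_mod_cast this
    have h2 : 0 ≤ z * (α.den : ℤ) := by positivity
    have h := Int.eq_zero_of_abs_lt_dvd hdvd (by rw [abs_lt]; constructor <;> omega)
    apply hd
    have h3 : α = z := by
      have h4 : α * α.den = z * α.den := by
        rw [Rat.mul_den_eq_num]
        exact_mod_cast sub_eq_zero.1 h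
      exact mul_right_cancel₀ hdp.ne' h4
    rw [h3]
    simp
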